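/- Let v, w ∈ ℝ^d with ‖v‖ < 1 and ‖w‖ < 1. Then (1 − ⟨v, w⟩) / √((1 − ‖v‖²)·(1 − ‖w‖²)) ≥ 1, with equality if and only if v = w. Hence the argument of arccosh in the Beltrami–Klein distance formula is always at least 1, and the distance between distinct points is strictly positive. -/

import Mathlib

open scoped RealInnerProductSpace

/-- Inverse hyperbolic cosine: `arcosh x = log (x + √(x² − 1))`. -/
noncomputable def arcosh (x : ℝ) : ℝ := Real.log (x + Real.sqrt (x ^ 2 - 1))

/-!
Polarization writes `1 - ⟪v, w⟫` as the arithmetic mean of `1 - ‖v‖ ^ 2` and `1 - ‖w‖ ^ 2` plus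
`‖v - w‖ ^ 2 / 2`. By AM-GM it therefore exceeds the geometric mean, which is the denominator of
the ratio, by at least `‖v - w‖ ^ 2 / 2`.
-/

theorem arcosh_pos {x : ℝ} (hx : 1 < x) : 0 < arcosh x :=
  Real.arcosh_pos hx

theorem sqrt_mul_le_half_add {a b : ℝ} (hab : 0 ≤ a + b) : √(a * b) ≤ (a + b) / 2 :=
  Real.sqrt_le_iff.mpr ⟨by positivity, by linarith [four_mul_le_sq_add a b]⟩

section SeminormedGroup

variable {E : Type*} [SeminormedAddCommGroup E] {v w : E}

theorem one_sub_sq_norm_pos (hv : ‖v‖ < 1) : 0 < 1 - ‖v‖ ^ 2 :=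
  sub_pos.mpr (pow_lt_one₀ (norm_nonneg v) hv two_ne_zero)

theorem sqrt_one_sub_sq_norm_mul_pos (hv : ‖v‖ < 1) (hw : ‖w‖ < 1) :
    0 < √((1 - ‖v‖ ^ 2) * (1 - ‖w‖ ^ 2)) :=
  Real.sqrt_pos.mpr (mul_pos (one_sub_sq_norm_pos hv) (one_sub_sq_norm_pos hw))

end SeminormedGroup

section SeminormedSpace

variable {E : Type*} [SeminormedAddCommGroup E] [InnerProductSpace ℝ E] {v w : E}

theorem one_sub_real_inner_eq (v w : E) :
    1 - ⟪v, w⟫ = ((1 - ‖v‖ ^ 2) + (1 - ‖w‖ ^ 2)) / 2 + ‖v - w‖ ^ 2 / 2 := by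
  rw [norm_sub_sq_real]
  ring

theorem sqrt_add_half_sq_norm_sub_le_one_sub_real_inner (hv : ‖v‖ ≤ 1) (hw : ‖w‖ ≤ 1) :
    √((1 - ‖v‖ ^ 2) * (1 - ‖w‖ ^ 2)) + ‖v - w‖ ^ 2 / 2 ≤ 1 - ⟪v, w⟫ := by
  have hv' : ‖v‖ ^ 2 ≤ 1 := pow_le_one₀ (norm_nonneg v) hv
  have hw' : ‖w‖ ^ 2 ≤ 1 := pow_le_one₀ (norm_nonneg w) hw
  rw [one_sub_real_inner_eq]
  gcongr
  exact sqrt_mul_le_half_add (by linarith)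

/-- The argument of `arcosh` in the Beltrami–Klein distance formula, that is, the hyperbolic cosine
of the distance for curvature `-1`. The formula makes sense in every real inner product space, but
represents a distance only for points of the open unit ball. -/
noncomputable def kleinArg (v w : E) : ℝ :=
  (1 - ⟪v, w⟫) / √((1 - ‖v‖ ^ 2) * (1 - ‖w‖ ^ 2))

theorem kleinArg_self (hv : ‖v‖ < 1) : kleinArg v v = 1 := by
  have hpos := one_sub_sq_norm_pos hv
  rw [kleinArg, real_inner_self_eq_norm_sq, Real.sqrt_mul_self hpos.le, div_self hpos.ne']

theorem one_le_kleinArg (hv : ‖v‖ < 1) (hw : ‖w‖ < 1) : 1 ≤ kleinArg v w := by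
  rw [kleinArg, one_le_div (sqrt_one_sub_sq_norm_mul_pos hv hw)]
  exact (le_add_of_nonneg_right (by positivity)).trans
    (sqrt_add_half_sq_norm_sub_le_one_sub_real_inner hv.le hw.le)

end SeminormedSpace

section NormedSpace

variable {E : Type*} [NormedAddCommGroup E] [InnerProductSpace ℝ E] {v w : E}

theorem kleinArg_eq_one_iff (hv : ‖v‖ < 1) (hw : ‖w‖ < 1) : kleinArg v w = 1 ↔ v = w := by
  refine ⟨fun h ↦ ?_, fun h ↦ h ▸ kleinArg_self hv⟩
  rw [kleinArg, div_eq_one_iff_eq (sqrt_one_sub_sq_norm_mul_pos hv hw).ne'] at h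
  have hsq : ‖v - w‖ ^ 2 ≤ 0 := by
    linarith [sqrt_add_half_sq_norm_sub_le_one_sub_real_inner hv.le hw.le]
  rwa [sq_nonpos_iff, norm_sub_eq_zero_iff] at hsq

theorem one_lt_kleinArg (hv : ‖v‖ < 1) (hw : ‖w‖ < 1) (hne : v ≠ w) : 1 < kleinArg v w :=
  (one_le_kleinArg hv hw).lt_of_ne' (mt (kleinArg_eq_one_iff hv hw).mp hne)

theorem klein_distance_arg_ge_one_general (hv : ‖v‖ < 1) (hw : ‖w‖ < 1) :
    1 ≤ kleinArg v w ∧ (kleinArg v w = 1 ↔ v = w) ∧ (v ≠ w → 0 < arcosh (kleinArg v w)) :=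
  ⟨one_le_kleinArg hv hw, kleinArg_eq_one_iff hv hw,
    fun hne ↦ arcosh_pos (one_lt_kleinArg hv hw hne)⟩

end NormedSpace

/-- For `v, w` in the open unit ball of `ℝ^d`,
`(1 − ⟨v,w⟩)/√((1 − ‖v‖²)(1 − ‖w‖²)) ≥ 1`, with equality iff `v = w`. Hence the
argument of `arccosh` in the Beltrami–Klein distance formula is always at least 1,
and the distance between distinct points is strictly positive. -/
theorem klein_distance_arg_ge_one
    (d : ℕ) (v w : EuclideanSpace ℝ (Fin d)) (hv : ‖v‖ < 1) (hw : ‖w‖ < 1) :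
    1 ≤ (1 - ⟪v, w⟫) / Real.sqrt ((1 - ‖v‖ ^ 2) * (1 - ‖w‖ ^ 2)) ∧
    ((1 - ⟪v, w⟫) / Real.sqrt ((1 - ‖v‖ ^ 2) * (1 - ‖w‖ ^ 2)) = 1 ↔ v = w) ∧
    (v ≠ w → 0 < arcosh ((1 - ⟪v, w⟫) / Real.sqrt ((1 - ‖v‖ ^ 2) * (1 - ‖w‖ ^ 2)))) :=
  klein_distance_arg_ge_one_general hv hw
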